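/- arXiv:hep-th/0110250 — 3 statements merged into one kernel-verified Lean document; each statement's English description precedes it below -/
import Mathlib

section
/- Let I ⊆ ℝ be an open interval, let h₄ : I → ℝ be continuously differentiable and strictly positive, let F : I → ℝ satisfy F' = √h₄ on I, and let c₁, c₂ be real constants with c₂ ≠ 0 and c₁ + c₂F(v) > 0 for all v ∈ I. Define h₅ = (c₁ + c₂F)². Then h₅ satisfies β := h₅'' − h₅'·(log √(h₄h₅))' = 0 on I, where ' denotes d/dv. (This is the formula √h₅ = h₅[1] + h₅[2]·∫√h₄ dv for the general solution of the equation S⁴₄ = 0 when h₄' ≠ 0.) -/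
/-- The formula `√h₅ = h₅[1] + h₅[2]·∫ √h₄ dv` gives a solution of the vacuum equation
`S⁴₄ = 0`, i.e. `β = h₅'' − h₅'·(log √(h₄h₅))' = 0`, on an open interval where
`h₄ > 0` and `c₁ + c₂F > 0` with `F' = √h₄`. -/
theorem sqrt_h5_integral_solves_beta
    (I : Set ℝ) (hIopen : IsOpen I) (hIinterval : I.OrdConnected)
    (h₄ : ℝ → ℝ) (hh₄ : ContDiffOn ℝ 1 h₄ I) (hh₄pos : ∀ v ∈ I, 0 < h₄ v)
    (F : ℝ → ℝ) (hF : ∀ v ∈ I, HasDerivAt F (Real.sqrt (h₄ v)) v)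
    (c₁ c₂ : ℝ) (hc₂ : c₂ ≠ 0) (hpos : ∀ v ∈ I, 0 < c₁ + c₂ * F v)
    (h₅ : ℝ → ℝ) (hh₅ : h₅ = fun v => (c₁ + c₂ * F v)^2) :
    ∀ v ∈ I,
      deriv (deriv h₅) v
        - deriv h₅ v * deriv (fun t => Real.log (Real.sqrt (h₄ t * h₅ t))) v = 0 := by
  intro v hv
  subst hh₅
  have hnhds := hIopen.mem_nhds hv
  have hd4 : DifferentiableAt ℝ h₄ v :=
    ((hh₄.differentiableOn (by norm_num)) v hv).differentiableAt hnhds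
  have hs : HasDerivAt (fun t => Real.sqrt (h₄ t)) (deriv h₄ v / (2 * Real.sqrt (h₄ v))) v :=
    hd4.hasDerivAt.sqrt (hh₄pos v hv).ne'
  generalize deriv h₄ v / (2 * Real.sqrt (h₄ v)) = d at hs
  have hu : ∀ t ∈ I, HasDerivAt (fun t => c₁ + c₂ * F t) (c₂ * Real.sqrt (h₄ t)) t :=
    fun t ht => ((hF t ht).const_mul c₂).const_add c₁
  have h1 : ∀ t ∈ I, deriv (fun v => (c₁ + c₂ * F v)^2) t
      = 2 * (c₁ + c₂ * F t) * (c₂ * Real.sqrt (h₄ t)) := by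
    intro t ht
    have := ((hu t ht).pow 2).deriv
    simpa [Pi.pow_def] using this
  have h2 : deriv (fun v => (c₁ + c₂ * F v)^2) =ᶠ[nhds v]
      fun t => 2 * (c₁ + c₂ * F t) * (c₂ * Real.sqrt (h₄ t)) := by
    filter_upwards [hnhds] with t ht using h1 t ht
  have h3 : (fun t => Real.log (Real.sqrt (h₄ t * (c₁ + c₂ * F t)^2))) =ᶠ[nhds v]
      fun t => Real.log (Real.sqrt (h₄ t) * (c₁ + c₂ * F t)) := by
    filter_upwards [hnhds] with t ht
    rw [Real.sqrt_mul (hh₄pos t ht).le, Real.sqrt_sq (hpos t ht).le]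
  have hsp : 0 < Real.sqrt (h₄ v) := Real.sqrt_pos.mpr (hh₄pos v hv)
  have hup := hpos v hv
  have h4 : deriv (fun t => 2 * (c₁ + c₂ * F t) * (c₂ * Real.sqrt (h₄ t))) v = _ :=
    (((hu v hv).const_mul 2).mul (hs.const_mul c₂)).deriv
  have h5 : deriv (fun t => Real.log (Real.sqrt (h₄ t) * (c₁ + c₂ * F t))) v = _ :=
    ((hs.mul (hu v hv)).log (mul_pos hsp hup).ne').deriv
  have h6 := h1 v hv
  rw [h2.deriv_eq, h3.deriv_eq, h4, h5, h6]
  simp only [Pi.mul_apply]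
  field_simp
  ring
end

section
/- Let I ⊆ ℝ be an open interval, let h₅ : I → ℝ be twice continuously differentiable with h₅ > 0 and h₅' > 0 on I, and let h₀ ≠ 0 be a real constant. Define h₄ = h₀²·((√h₅)')². Then h₄ > 0 on I and the pair (h₄, h₅) satisfies β := h₅'' − h₅'·(log √(h₄h₅))' = 0 on I, where ' denotes d/dv. (This is the formula √h₄ = h₀·(√h₅)' producing, for a given h₅ with h₅' ≠ 0, a solution h₄ of the equation S⁴₄ = 0.) -/
/-- The formula `√h₄ = h₀·(√h₅)'` produces, for a given `h₅` with `h₅' > 0`, a positive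
solution `h₄ = h₀²·((√h₅)')²` of the vacuum equation `S⁴₄ = 0`, i.e.
`β = h₅'' − h₅'·(log √(h₄h₅))' = 0`. -/
theorem h4_from_h5_solves_beta
    (I : Set ℝ) (hIopen : IsOpen I) (hIinterval : I.OrdConnected)
    (h₅ : ℝ → ℝ) (hh₅ : ContDiffOn ℝ 2 h₅ I)
    (hh₅pos : ∀ v ∈ I, 0 < h₅ v) (hh₅' : ∀ v ∈ I, 0 < deriv h₅ v)
    (h₀ : ℝ) (hh₀ : h₀ ≠ 0)
    (h₄ : ℝ → ℝ)
    (hh₄ : h₄ = fun v => h₀^2 * (deriv (fun t => Real.sqrt (h₅ t)) v)^2) :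
    (∀ v ∈ I, 0 < h₄ v) ∧
    (∀ v ∈ I,
      deriv (deriv h₅) v
        - deriv h₅ v * deriv (fun t => Real.log (Real.sqrt (h₄ t * h₅ t))) v = 0) := by
  have hd : ∀ v ∈ I, DifferentiableAt ℝ h₅ v := fun v hv =>
    (hh₅.differentiableOn (by norm_num)).differentiableAt (hIopen.mem_nhds hv)
  have hd2 : ∀ v ∈ I, DifferentiableAt ℝ (deriv h₅) v := fun v hv =>
    ((hh₅.deriv_of_isOpen (m := 1) hIopen (by norm_num)).differentiableOn
      (by norm_num)).differentiableAt (hIopen.mem_nhds hv)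
  have h4 : ∀ v ∈ I, h₄ v = h₀ ^ 2 * (deriv h₅ v / (2 * Real.sqrt (h₅ v))) ^ 2 := by
    intro v hv
    rw [hh₄]
    simp only
    rw [((hd v hv).hasDerivAt.sqrt (hh₅pos v hv).ne').deriv]
  refine ⟨?_, ?_⟩
  · intro v hv
    rw [h4 v hv]
    have h1 := hh₅pos v hv
    have h2 := hh₅' v hv
    positivity
  · intro v hv
    have key : (fun t => Real.log (Real.sqrt (h₄ t * h₅ t))) =ᶠ[nhds v]
        fun t => Real.log (|h₀| / 2 * deriv h₅ t) := by
      filter_upwards [hIopen.mem_nhds hv] with t ht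
      have h1 := hh₅pos t ht
      have h2 := hh₅' t ht
      have e : h₄ t * h₅ t = (|h₀| / 2 * deriv h₅ t) ^ 2 := by
        rw [h4 t ht, div_pow, mul_pow, Real.sq_sqrt h1.le, mul_pow, div_pow, sq_abs]
        field_simp
        try norm_num
      rw [e, Real.sqrt_sq (by positivity)]
    have h2 := hh₅' v hv
    have h0 : 0 < |h₀| := abs_pos.mpr hh₀
    rw [key.deriv_eq, (((hd2 v hv).hasDerivAt.const_mul (|h₀| / 2)).log (by positivity)).deriv]
    field_simp
    try ring
end

section
/- Let I ⊆ ℝ be an open interval, Λ a real constant, and let h₄, h₅ : I → ℝ be continuously differentiable with h₄ > 0, h₅ > 0, h₅ twice differentiable, and h₅' ≠ 0 on I. Set τ = h₅'/(2h₅), so τ ≠ 0 and τ is differentiable. Then the equation h₅'' − h₅'·(log √(h₄h₅))' = 2Λ·h₄·h₅ holds on I if and only if h₄ satisfies the first-order Bernoulli-type equation h₄' + (2Λ/τ)·h₄² − 2·(τ'/τ + τ)·h₄ = 0 on I (where ' denotes d/dv). -/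
/-- The equation `S⁴₄ = S⁵₅ = −Λ`, i.e. `h₅'' − h₅'·(log √(h₄h₅))' = 2Λh₄h₅`, holds iff
`h₄` satisfies the Bernoulli-type equation `h₄' + (2Λ/τ)h₄² − 2(τ'/τ + τ)h₄ = 0`,
where `τ = h₅'/(2h₅)`; moreover `τ ≠ 0` and `τ` is differentiable on the interval. -/
theorem ricci2_lambda_iff_bernoulli
    (I : Set ℝ) (hIopen : IsOpen I) (hIinterval : I.OrdConnected) (Λ : ℝ)
    (h₄ h₅ : ℝ → ℝ)
    (hh₄ : ContDiffOn ℝ 1 h₄ I) (hh₅ : ContDiffOn ℝ 2 h₅ I)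
    (hh₄pos : ∀ v ∈ I, 0 < h₄ v) (hh₅pos : ∀ v ∈ I, 0 < h₅ v)
    (hh₅' : ∀ v ∈ I, deriv h₅ v ≠ 0)
    (τ : ℝ → ℝ) (hτ : τ = fun v => deriv h₅ v / (2 * h₅ v)) :
    (∀ v ∈ I, τ v ≠ 0) ∧ (∀ v ∈ I, DifferentiableAt ℝ τ v) ∧
    (∀ v ∈ I,
      (deriv (deriv h₅) v
          - deriv h₅ v * deriv (fun t => Real.log (Real.sqrt (h₄ t * h₅ t))) v
        = 2 * Λ * h₄ v * h₅ v)
      ↔ (deriv h₄ v + (2 * Λ / τ v) * (h₄ v)^2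
          - 2 * (deriv τ v / τ v + τ v) * h₄ v = 0)) := by
  have hd4 : ∀ v ∈ I, HasDerivAt h₄ (deriv h₄ v) v := fun v hv =>
    ((hh₄.differentiableOn (by norm_num)).differentiableAt (hIopen.mem_nhds hv)).hasDerivAt
  have hd5 : ∀ v ∈ I, HasDerivAt h₅ (deriv h₅ v) v := fun v hv =>
    ((hh₅.differentiableOn (by norm_num)).differentiableAt (hIopen.mem_nhds hv)).hasDerivAt
  have hc : ContDiffOn ℝ 1 (deriv h₅) I :=
    hh₅.deriv_of_isOpen hIopen (by norm_num)
  have hdd5 : ∀ v ∈ I, HasDerivAt (deriv h₅) (deriv (deriv h₅) v) v := fun v hv =>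
    ((hc.differentiableOn (by norm_num)).differentiableAt (hIopen.mem_nhds hv)).hasDerivAt
  have hdτ : ∀ v ∈ I, HasDerivAt τ ((deriv (deriv h₅) v * (2 * h₅ v)
      - deriv h₅ v * (2 * deriv h₅ v)) / (2 * h₅ v) ^ 2) v := by
    intro v hv
    rw [hτ]
    have hb := hh₅pos v hv
    exact (hdd5 v hv).div ((hd5 v hv).const_mul 2) (by positivity)
  refine ⟨?_, fun v hv => (hdτ v hv).differentiableAt, ?_⟩
  · intro v hv
    have hb := hh₅pos v hv
    rw [hτ]
    exact div_ne_zero (hh₅' v hv) (by positivity)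
  · intro v hv
    have ha := hh₄pos v hv
    have hb := hh₅pos v hv
    have hp := hh₅' v hv
    have hm : 0 < h₄ v * h₅ v := mul_pos ha hb
    have hL := ((((hd4 v hv).mul (hd5 v hv)).sqrt hm.ne').log (Real.sqrt_pos.2 hm).ne').deriv
    have hL' : deriv (fun t => Real.log (Real.sqrt (h₄ t * h₅ t))) v
        = deriv h₄ v / (2 * h₄ v) + deriv h₅ v / (2 * h₅ v) := by
      refine hL.trans ?_
      simp only [Pi.mul_apply]
      rw [div_div, mul_assoc, Real.mul_self_sqrt hm.le]
      field_simp
    have hτv : τ v = deriv h₅ v / (2 * h₅ v) := by rw [hτ]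
    rw [hL', (hdτ v hv).deriv, hτv]
    generalize deriv (deriv h₅) v = q at *
    generalize deriv h₅ v = p at *
    generalize deriv h₄ v = a' at *
    generalize h₄ v = a at *
    generalize h₅ v = b at *
    have key : a' + 2 * Λ / (p / (2 * b)) * a ^ 2
        - 2 * ((q * (2 * b) - p * (2 * p)) / (2 * b) ^ 2 / (p / (2 * b)) + p / (2 * b)) * a
        = -(2 * a / p) * (q - p * (a' / (2 * a) + p / (2 * b)) - 2 * Λ * a * b) := by
      field_simp
      ring
    have hk : -(2 * a / p) ≠ 0 := neg_ne_zero.2 (div_ne_zero (by positivity) hp)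
    rw [key, mul_eq_zero, or_iff_right hk, sub_eq_zero]
end
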